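/- Let H be a commutative monoid with identity 1 and absorbing zero 0, let r : Set H → Set H be an ideal system on H, and let L be a multiplicative lattice. Suppose there is a bijection e from the set of r-ideals of H onto L such that e and its inverse are monotone (inclusion of r-ideals corresponds to ≤ in L) and e((X*Y)_r) = e(X) * e(Y) for all r-ideals X, Y. Then L is generated by meet principal elements: every a ∈ L satisfies a = sSup {x ∈ L | x is meet principal and x ≤ a}. -/

import Mathlib

/-- The latResidual `(a : x) = sSup {y | x*y ≤ a}` in a multiplicative lattice. -/
def latResidual {L : Type*} [CompleteLattice L] [CommMonoid L] (a x : L) : L :=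
  sSup {y | x * y ≤ a}

/-- An element `x` of a multiplicative lattice is meet principal if
`a ⊓ (x*b) = x*((a : x) ⊓ b)` for all `a, b`. -/
def MeetPrincipal {L : Type*} [CompleteLattice L] [CommMonoid L] (x : L) : Prop :=
  ∀ a b : L, a ⊓ (x * b) = x * (latResidual a x ⊓ b)

theorem mul_latResidual_le {L : Type*} [CompleteLattice L] [CommMonoid L]
    (hdist : ∀ (a : L) (S : Set L), a * sSup S = ⨆ b ∈ S, a * b) (a x : L) :
    x * latResidual a x ≤ a := by
  rw [latResidual, hdist]
  exact iSup₂_le fun _ hb => hb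

theorem mul_le_mul_left_of_mul_sSup {L : Type*} [CompleteLattice L] [CommMonoid L]
    (hdist : ∀ (a : L) (S : Set L), a * sSup S = ⨆ b ∈ S, a * b) (x : L) {b c : L}
    (hbc : b ≤ c) : x * b ≤ x * c := by
  have h := hdist x {b, c}
  rw [sSup_pair, sup_eq_right.mpr hbc] at h
  rw [h]
  exact le_iSup₂_of_le b (Set.mem_insert _ _) le_rfl

/-- A family `P` of elements that detects the order, is multiplicative, and such that everything
of the family below `P c * b` is a multiple of `P c`, consists of meet principal elements. -/
theorem meetPrincipal_of_detecting_family {L H : Type*} [CompleteLattice L] [CommMonoid L]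
    (hdist : ∀ (a : L) (S : Set L), a * sSup S = ⨆ b ∈ S, a * b) [Mul H] (P : H → L)
    (le_of_forall : ∀ u v : L, (∀ z, P z ≤ u → P z ≤ v) → u ≤ v)
    (P_mul : ∀ c d, P (c * d) = P c * P d)
    (exists_factor : ∀ c z b, P z ≤ P c * b → ∃ d, P d ≤ b ∧ c * d = z) (c : H) :
    MeetPrincipal (P c) := by
  intro a b
  apply le_antisymm
  · refine le_of_forall _ _ fun z hz => ?_
    obtain ⟨d, hd, rfl⟩ := exists_factor c z b (hz.trans inf_le_right)
    have hda : P c * P d ≤ a := P_mul c d ▸ hz.trans inf_le_left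
    rw [P_mul]
    exact mul_le_mul_left_of_mul_sSup hdist _ (le_inf (le_sSup hda) hd)
  · exact le_inf
      ((mul_le_mul_left_of_mul_sSup hdist _ inf_le_left).trans (mul_latResidual_le hdist a _))
      (mul_le_mul_left_of_mul_sSup hdist _ inf_le_right)

/-- if a multiplicative lattice `L` is (order- and
multiplication-) isomorphic to the lattice of `r`-ideals of an ideal system `r`
on a commutative monoid `H` with zero, then `L` is generated by meet principal
elements. -/
theorem stmt_8 {L : Type*} [CompleteLattice L] [CommMonoid L]
    (hdist : ∀ (a : L) (S : Set L), a * sSup S = ⨆ b ∈ S, a * b)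
    (hone : (1 : L) = ⊤)
    {H : Type*} [CommMonoidWithZero H] (r : Set H → Set H)
    (s1 : ∀ X : Set H, ∀ x ∈ X, ∀ h : H, x * h ∈ r X)
    (s2 : ∀ X Y : Set H, X ⊆ Y → r X ⊆ r Y)
    (s3 : ∀ X : Set H, r (r X) = r X)
    (s4 : ∀ (c : H) (X : Set H), (fun y => c * y) '' r X = r ((fun y => c * y) '' X))
    (e : {A : Set H // A ∈ Set.range r} → L)
    (e_bij : Function.Bijective e)
    (e_mono : ∀ A B : {A : Set H // A ∈ Set.range r}, A.1 ⊆ B.1 → e A ≤ e B)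
    (e_mono_inv : ∀ A B : {A : Set H // A ∈ Set.range r}, e A ≤ e B → A.1 ⊆ B.1)
    (e_mul : ∀ A B : {A : Set H // A ∈ Set.range r},
      e ⟨r (Set.image2 (· * ·) A.1 B.1), Set.mem_range_self _⟩ = e A * e B) :
    ∀ a : L, a = sSup {x | MeetPrincipal x ∧ x ≤ a} := by
  have fixed : ∀ A : {A : Set H // A ∈ Set.range r}, r A.1 = A.1 := by
    rintro ⟨_, X, rfl⟩
    exact s3 X
  have subset_r : ∀ X : Set H, X ⊆ r X := fun X x hx => by simpa using s1 X x hx 1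
  have r_singleton : ∀ c : H, r {c} = Set.range fun h => c * h := fun c => by
    have r_one : r {(1 : H)} = Set.univ :=
      Set.eq_univ_of_forall fun h => by simpa using s1 {1} 1 rfl h
    simpa [r_one] using (s4 c {1}).symm
  have image2_eq : ∀ (c : H) (B : {A : Set H // A ∈ Set.range r}),
      Set.image2 (· * ·) (r {c}) B.1 = (fun y => c * y) '' B.1 := by
    intro c B
    ext z
    constructor
    · rintro ⟨x, hx, b, hb, rfl⟩
      rw [r_singleton] at hx
      obtain ⟨h, rfl⟩ := hx
      refine ⟨b * h, fixed B ▸ s1 B.1 b hb h, ?_⟩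
      simp only [mul_assoc, mul_comm h]
    · rintro ⟨b, hb, rfl⟩
      exact ⟨c, subset_r _ rfl, b, hb, rfl⟩
  let P : H → L := fun c => e ⟨r {c}, Set.mem_range_self _⟩
  have P_le : ∀ z A, P z ≤ e A ↔ z ∈ A.1 := fun z A =>
    ⟨fun h => e_mono_inv _ _ h (subset_r _ rfl),
      fun h => e_mono _ _ (fixed A ▸ s2 _ _ (Set.singleton_subset_iff.mpr h))⟩
  have P_mul_e : ∀ c B, P c * e B =
      e ⟨r ((fun y => c * y) '' B.1), Set.mem_range_self _⟩ := by
    intro c B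
    simp only [P, ← e_mul, image2_eq]
  have le_of_forall : ∀ u v : L, (∀ z, P z ≤ u → P z ≤ v) → u ≤ v := by
    intro u v h
    obtain ⟨A, rfl⟩ := e_bij.2 u
    obtain ⟨B, rfl⟩ := e_bij.2 v
    exact e_mono _ _ fun z hz => (P_le z B).1 (h z ((P_le z A).2 hz))
  have P_mul : ∀ c d, P (c * d) = P c * P d := by
    intro c d
    rw [P_mul_e]
    simp only [P, ← s4, s3]
    simp only [s4, Set.image_singleton]
  have exists_factor : ∀ c z b, P z ≤ P c * b → ∃ d, P d ≤ b ∧ c * d = z := by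
    intro c z b h
    obtain ⟨B, rfl⟩ := e_bij.2 b
    rw [P_mul_e, P_le] at h
    simp only [← s4, fixed B] at h
    obtain ⟨d, hd, rfl⟩ := h
    exact ⟨d, (P_le d B).2 hd, rfl⟩
  intro a
  apply le_antisymm
  · exact le_of_forall _ _ fun z hz => le_sSup
      ⟨meetPrincipal_of_detecting_family hdist P le_of_forall P_mul exists_factor z, hz⟩
  · exact sSup_le fun x hx => hx.2
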